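/- arXiv:2604.27055 — 2 statements merged into one kernel-verified Lean document; each statement's English description precedes it below -/
import Mathlib

section
/- Let L = m + n with 1 ≤ m ≤ n, and let Γ be a real antisymmetric 2L×2L matrix (Γᵀ = −Γ) with Γ² = −𝟙, indexed so that the first 2m indices belong to subsystem A and the last 2n to subsystem B. Then there exist orthogonal matrices O_A ∈ O(2m, ℝ), O_B ∈ O(2n, ℝ) and real numbers ν₁,…,ν_m ∈ [0,1] such that, with μ_k = √(1 − ν_k²), (O_A ⊕ O_B) Γ (O_A ⊕ O_B)ᵀ is, up to a permutation of rows and columns pairing the k-th A-mode with the k-th B-mode, the block-diagonal matrix ⨁_{k=1}^{m} Γ_k ⊕ ⨁_{ℓ=1}^{n−m} J, where Γ_k is the 4×4 matrix with rows (0, ν_k, μ_k, 0), (−ν_k, 0, 0, μ_k), (−μ_k, 0, 0, −ν_k), (0, −μ_k, ν_k, 0) and J = [[0,1],[−1,0]]. -/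
open Matrix

/-- The canonical 4×4 covariance block of one entangled fermionic mode pair. -/
def gammaBlock (ν μ : ℝ) : Matrix (Fin 4) (Fin 4) ℝ :=
  !![0, ν, μ, 0; -ν, 0, 0, μ; -μ, 0, 0, -ν; 0, -μ, ν, 0]

/-- The 2×2 local pure block J. -/
def Jblock : Matrix (Fin 2) (Fin 2) ℝ := !![0, 1; -1, 0]

/-!
Write `X` and `Y` for the diagonal blocks of `Γ` and `C` for the block mapping the `A`-space to the
`B`-space. The skew operator `X` splits the `A`-space into orthogonal planes on which it is
`ν k • Jblock`. Purity says that `Cᵀ C = 1 + X²`, `C Cᵀ = 1 + Y²` and `C X = -Y C`, so `C` scales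
the `k`-th plane by `√(1 - ν k ^ 2)` and, unless `ν k = 1`, carries it onto a plane on which `Y` is
`-ν k • Jblock`. On the complement of these images `Cᵀ` vanishes, hence `Y² = -1` and `Y` splits it
into planes on which it is `Jblock`. The planes with `ν k = 1`, which `C` kills, take their partners
from the complement with the two basis vectors exchanged, since their partner needs `-Jblock`.
-/

section

open scoped RealInnerProductSpace
open LinearMap (adjoint)
open Module (finrank)

section Orthonormal

variable {𝕜 E ι κ : Type*} [RCLike 𝕜] [NormedAddCommGroup E] [InnerProductSpace 𝕜 E]

theorem mem_orthogonal_span_range_iff {v : ι → E} {x : E} :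
    x ∈ (Submodule.span 𝕜 (Set.range v))ᗮ ↔ ∀ i, inner 𝕜 (v i) x = 0 := by
  rw [← Submodule.span_singleton_le_iff_mem, ← Submodule.isOrtho_iff_le, Submodule.isOrtho_comm,
    Submodule.isOrtho_span]
  simp only [Set.forall_mem_range, Set.mem_singleton_iff, forall_eq]

theorem eq_zero_of_forall_inner_orthonormal_eq_zero [FiniteDimensional 𝕜 E] [Fintype ι] {v : ι → E}
    (hv : Orthonormal 𝕜 v) (hcard : Fintype.card ι = finrank 𝕜 E) {x : E}
    (hx : ∀ i, inner 𝕜 (v i) x = 0) : x = 0 := by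
  have hspan := hv.linearIndependent.span_eq_top_of_card_eq_finrank' hcard
  simpa [hspan] using mem_orthogonal_span_range_iff.mpr hx

theorem orthonormal_sumElim {v : ι → E} {w : κ → E} (hv : Orthonormal 𝕜 v)
    (hw : Orthonormal 𝕜 w) (hvw : ∀ i j, inner 𝕜 (v i) (w j) = 0) :
    Orthonormal 𝕜 (Sum.elim v w) := by
  classical
  simp only [orthonormal_iff_ite] at hv hw ⊢
  rintro (i | i) (j | j)
  · simp [hv]
  · simp [hvw]
  · simpa using inner_eq_zero_symm.mp (hvw j i)
  · simp [hw]

end Orthonormal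

/-- A skew normal family of `X`: an orthonormal system of pairs `v k 0`, `v k 1`, each spanning a
plane on which `X` has matrix `ν k • Jblock`. Exchanging the two vectors of a pair changes the sign
of `ν k`, which is not restricted. The system is indexed with the pair index `k` last, as the
entries of `blockDiagonal` are. -/
structure IsSkewNormalFamily {E ι : Type*} [NormedAddCommGroup E] [InnerProductSpace ℝ E]
    (X : E →ₗ[ℝ] E) (v : ι → Fin 2 → E) (ν : ι → ℝ) : Prop where
  orthonormal : Orthonormal ℝ fun p : Fin 2 × ι => v p.2 p.1
  apply_zero : ∀ k, X (v k 0) = -ν k • v k 1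
  apply_one : ∀ k, X (v k 1) = ν k • v k 0

namespace IsSkewNormalFamily

variable {E ι κ : Type*} [NormedAddCommGroup E] [InnerProductSpace ℝ E]
  {X : E →ₗ[ℝ] E} {v : ι → Fin 2 → E} {ν : ι → ℝ} {w : κ → Fin 2 → E} {ρ : κ → ℝ}

theorem of_isEmpty [IsEmpty ι] (v : ι → Fin 2 → E) (ν : ι → ℝ) : IsSkewNormalFamily X v ν :=
  ⟨⟨isEmptyElim, fun p => isEmptyElim p⟩, isEmptyElim, isEmptyElim⟩

theorem comp (hv : IsSkewNormalFamily X v ν) {f : κ → ι} (hf : f.Injective) :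
    IsSkewNormalFamily X (v ∘ f) (ν ∘ f) where
  orthonormal := hv.orthonormal.comp (Prod.map id f) (Function.injective_id.prodMap hf)
  apply_zero k := hv.apply_zero (f k)
  apply_one k := hv.apply_one (f k)

theorem swap (hv : IsSkewNormalFamily X v ν) :
    IsSkewNormalFamily X (fun k i => v k i.rev) (-ν) where
  orthonormal := hv.orthonormal.comp (Prod.map Fin.rev id)
    (Fin.rev_injective.prodMap Function.injective_id)
  apply_zero k := by simpa using hv.apply_one k
  apply_one k := by simpa using hv.apply_zero k

theorem sumElim (hv : IsSkewNormalFamily X v ν) (hw : IsSkewNormalFamily X w ρ)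
    (hvw : ∀ k i l j, ⟪v k i, w l j⟫ = 0) :
    IsSkewNormalFamily X (Sum.elim v w) (Sum.elim ν ρ) where
  orthonormal := by
    convert (orthonormal_sumElim hv.orthonormal hw.orthonormal
      fun p q => hvw p.2 p.1 q.2 q.1).comp _ (Equiv.prodSumDistrib (Fin 2) ι κ).injective using 1
    ext ⟨i, k | k⟩ <;> rfl
  apply_zero := Sum.rec hv.apply_zero hw.apply_zero
  apply_one := Sum.rec hv.apply_one hw.apply_one

theorem of_restrict {S : Submodule ℝ E} (hS : ∀ x ∈ S, X x ∈ S) {v : ι → Fin 2 → S}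
    (hv : IsSkewNormalFamily (X.restrict hS) v ν) :
    IsSkewNormalFamily X (fun k i => (v k i : E)) ν where
  orthonormal := hv.orthonormal.comp_linearIsometry S.subtypeₗᵢ
  apply_zero k := by simpa using congrArg Subtype.val (hv.apply_zero k)
  apply_one k := by simpa using congrArg Subtype.val (hv.apply_one k)

theorem apply_apply (hv : IsSkewNormalFamily X v ν) (k : ι) (i : Fin 2) :
    X (X (v k i)) = -ν k ^ 2 • v k i := by
  fin_cases i <;> simp [hv.apply_zero, hv.apply_one, smul_smul, sq]

theorem norm_eq_one (hv : IsSkewNormalFamily X v ν) (k : ι) (i : Fin 2) : ‖v k i‖ = 1 :=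
  hv.orthonormal.norm_eq_one (i, k)

theorem inner_eq_ite [DecidableEq ι] (hv : IsSkewNormalFamily X v ν) (k l : ι) (i j : Fin 2) :
    ⟪v k i, v l j⟫ = if (i, k) = (j, l) then 1 else 0 :=
  orthonormal_iff_ite.mp hv.orthonormal (i, k) (j, l)

theorem inner_apply [DecidableEq ι] (hv : IsSkewNormalFamily X v ν) (p q : Fin 2 × ι) :
    ⟪v p.2 p.1, X (v q.2 q.1)⟫ = blockDiagonal (fun k => ν k • Jblock) p q := by
  obtain ⟨i, k⟩ := p
  obtain ⟨j, l⟩ := q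
  by_cases hkl : k = l <;> fin_cases i <;> fin_cases j <;>
    simp [hv.apply_zero, hv.apply_one, hv.inner_eq_ite, hv.norm_eq_one, inner_smul_right,
      blockDiagonal_apply, Jblock, hkl]

end IsSkewNormalFamily

section SkewAdjoint

variable {E : Type*} [NormedAddCommGroup E] [InnerProductSpace ℝ E] [FiniteDimensional ℝ E]
  {X : E →ₗ[ℝ] E}

theorem inner_apply_left_of_adjoint_eq_neg (hX : adjoint X = -X) (x y : E) :
    ⟪X x, y⟫ = -⟪x, X y⟫ := by
  rw [← LinearMap.adjoint_inner_right, hX, LinearMap.neg_apply, inner_neg_right]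

theorem adjoint_restrict_eq_neg (hX : adjoint X = -X) {S : Submodule ℝ E}
    (hS : ∀ x ∈ S, X x ∈ S) : adjoint (X.restrict hS) = -X.restrict hS := by
  refine ((LinearMap.eq_adjoint_iff _ _).mpr fun x y => ?_).symm
  simp [inner_apply_left_of_adjoint_eq_neg hX]

theorem exists_norm_eq_one_apply_apply_eq_neg_sq_smul (hX : adjoint X = -X) (hX0 : X ≠ 0) :
    ∃ (a : E) (σ : ℝ), ‖a‖ = 1 ∧ 0 < σ ∧ X (X a) = -σ ^ 2 • a := by
  have hrange : 0 < finrank ℝ X.range :=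
    Nat.pos_of_ne_zero fun h => hX0 (LinearMap.range_eq_bot.mp (Submodule.finrank_eq_zero.mp h))
  have hdim : 0 < finrank ℝ E := hrange.trans_le X.finrank_range_le
  have hsymm := X.isSymmetric_adjoint_comp_self
  refine ⟨hsymm.eigenvectorBasis rfl ⟨0, hdim⟩, X.singularValues 0,
    OrthonormalBasis.norm_eq_one _ _, X.singularValues_pos_iff_lt_finrank_range.mpr hrange, ?_⟩
  have heigen := hsymm.apply_eigenvectorBasis rfl ⟨0, hdim⟩
  rw [← X.sq_singularValues_of_lt rfl hdim] at heigen
  simpa [hX, neg_eq_iff_eq_neg] using heigen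

theorem isSkewNormalFamily_of_apply_apply (hX : adjoint X = -X) {a : E} {σ : ℝ} (ha : ‖a‖ = 1)
    (hσ : 0 < σ) (hXX : X (X a) = -σ ^ 2 • a) :
    IsSkewNormalFamily X (fun _ : Unit => ![a, -σ⁻¹ • X a]) fun _ => σ := by
  have haX : ⟪a, X a⟫ = 0 := by
    have := inner_apply_left_of_adjoint_eq_neg hX a a
    rw [real_inner_comm] at this
    linarith
  have hXa : ‖X a‖ = σ := by
    rw [← sq_eq_sq₀ (norm_nonneg _) hσ.le, ← real_inner_self_eq_norm_sq,
      inner_apply_left_of_adjoint_eq_neg hX, hXX, inner_smul_right, real_inner_self_eq_norm_sq, ha]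
    ring
  have hb : ‖-σ⁻¹ • X a‖ = 1 := by
    rw [norm_smul, hXa, norm_neg, norm_inv, Real.norm_of_nonneg hσ.le, inv_mul_cancel₀ hσ.ne']
  have horth : Orthonormal ℝ ![a, -σ⁻¹ • X a] := by
    refine ⟨Fin.forall_fin_two.mpr ⟨ha, hb⟩, fun i j hij => ?_⟩
    fin_cases i <;> fin_cases j <;>
      simp_all [inner_smul_left, inner_smul_right, real_inner_comm]
  refine ⟨horth.comp Prod.fst fun p q h => Prod.ext h rfl, fun _ => ?_, fun _ => ?_⟩
  · simp [smul_smul, hσ.ne']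
  · simp [hXX, smul_smul, hσ.ne', sq]

theorem exists_isSkewNormalFamily_unit (hX : adjoint X = -X) (hE : 2 ≤ finrank ℝ E) :
    ∃ (v : Unit → Fin 2 → E) (ν : Unit → ℝ), (∀ l, 0 ≤ ν l) ∧ IsSkewNormalFamily X v ν := by
  rcases eq_or_ne X 0 with rfl | hX0
  · exact ⟨fun _ i => stdOrthonormalBasis ℝ E (Fin.castLE hE i), 0, fun _ => le_rfl,
      (stdOrthonormalBasis ℝ E).orthonormal.comp (fun p => Fin.castLE hE p.1)
        fun p q h => Prod.ext (Fin.castLE_injective hE h) rfl, by simp, by simp⟩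
  · obtain ⟨a, σ, ha, hσ, hXX⟩ := exists_norm_eq_one_apply_apply_eq_neg_sq_smul hX hX0
    exact ⟨_, _, fun _ => hσ.le, isSkewNormalFamily_of_apply_apply hX ha hσ hXX⟩

namespace IsSkewNormalFamily

variable {ι : Type*} {v : ι → Fin 2 → E} {ν : ι → ℝ}

theorem apply_mem_orthogonal_span (hX : adjoint X = -X) (hv : IsSkewNormalFamily X v ν) :
    ∀ x ∈ (Submodule.span ℝ (Set.range fun p : Fin 2 × ι => v p.2 p.1))ᗮ,
      X x ∈ (Submodule.span ℝ (Set.range fun p : Fin 2 × ι => v p.2 p.1))ᗮ := by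
  simp only [mem_orthogonal_span_range_iff, Prod.forall, ← LinearMap.adjoint_inner_left, hX]
  intro x hx i k
  fin_cases i <;> simp [hv.apply_zero, hv.apply_one, inner_smul_left, hx]

theorem exists_orthogonal_unit [Finite ι] (hX : adjoint X = -X) (hv : IsSkewNormalFamily X v ν)
    (hcard : 2 * (Nat.card ι + 1) ≤ finrank ℝ E) :
    ∃ (w : Unit → Fin 2 → E) (ρ : Unit → ℝ), (∀ l, 0 ≤ ρ l) ∧ IsSkewNormalFamily X w ρ ∧
      ∀ k i l j, ⟪v k i, w l j⟫ = 0 := by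
  have := Fintype.ofFinite ι
  have hspan := finrank_span_eq_card hv.orthonormal.linearIndependent
  have hsum := Submodule.finrank_add_finrank_orthogonal
    (Submodule.span ℝ (Set.range fun p : Fin 2 × ι => v p.2 p.1))
  rw [← Nat.card_eq_fintype_card, Nat.card_prod, Nat.card_fin] at hspan
  obtain ⟨w, ρ, hρ, hw⟩ := exists_isSkewNormalFamily_unit
    (adjoint_restrict_eq_neg hX (hv.apply_mem_orthogonal_span hX)) (by omega)
  exact ⟨_, ρ, hρ, hw.of_restrict,
    fun k i l j => mem_orthogonal_span_range_iff.mp (w l j).2 (i, k)⟩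

theorem exists_orthogonal [Finite ι] (hX : adjoint X = -X) (hv : IsSkewNormalFamily X v ν)
    (κ : Type*) [Finite κ] (hcard : 2 * (Nat.card ι + Nat.card κ) ≤ finrank ℝ E) :
    ∃ (w : κ → Fin 2 → E) (ρ : κ → ℝ), (∀ l, 0 ≤ ρ l) ∧ IsSkewNormalFamily X w ρ ∧
      ∀ k i l j, ⟪v k i, w l j⟫ = 0 := by
  induction κ using Finite.induction_empty_option with
  | of_equiv e ih =>
    obtain ⟨w, ρ, hρ, hw, hvw⟩ := ih (by rwa [Nat.card_congr e])
    exact ⟨w ∘ e.symm, ρ ∘ e.symm, fun l => hρ _, hw.comp e.symm.injective,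
      fun k i l => hvw k i (e.symm l)⟩
  | h_empty =>
    exact ⟨PEmpty.elim, PEmpty.elim, by simp, .of_isEmpty _ _, by simp⟩
  | @h_option α _ ih =>
    rw [Finite.card_option] at hcard
    obtain ⟨w, ρ, hρ, hw, hvw⟩ := ih (by omega)
    obtain ⟨p, σ, hσ, hp, hvp⟩ := (hv.sumElim hw hvw).exists_orthogonal_unit hX
      (by rw [Nat.card_sum]; omega)
    have hvwp : ∀ k i l j, ⟪v k i, Sum.elim w p l j⟫ = 0 := fun k i =>
      Sum.rec (hvw k i) (hvp (.inl k) i)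
    have hρσ : ∀ l, 0 ≤ Sum.elim ρ σ l := Sum.rec hρ hσ
    let e := Equiv.optionEquivSumPUnit.{0} α
    exact ⟨Sum.elim w p ∘ e, Sum.elim ρ σ ∘ e, fun l => hρσ (e l),
      (hw.sumElim hp fun k => hvp (.inr k)).comp e.injective,
      fun k i l => hvwp k i (e l)⟩

end IsSkewNormalFamily

theorem exists_isSkewNormalFamily (hX : adjoint X = -X) (ι : Type*) [Finite ι]
    (hE : 2 * Nat.card ι ≤ finrank ℝ E) :
    ∃ (v : ι → Fin 2 → E) (ν : ι → ℝ), (∀ k, 0 ≤ ν k) ∧ IsSkewNormalFamily X v ν := by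
  obtain ⟨v, ν, hν, hv, -⟩ := IsSkewNormalFamily.of_isEmpty (ι := Empty)
    Empty.elim Empty.elim |>.exists_orthogonal hX ι (by simpa using hE)
  exact ⟨v, ν, hν, hv⟩

end SkewAdjoint

section Bipartite

variable {E F ι κ : Type*} [NormedAddCommGroup E] [InnerProductSpace ℝ E] [FiniteDimensional ℝ E]
  [NormedAddCommGroup F] [InnerProductSpace ℝ F] [FiniteDimensional ℝ F]
  {X : E →ₗ[ℝ] E} {Y : F →ₗ[ℝ] F} {C : E →ₗ[ℝ] F} {a : ι → Fin 2 → E} {ν : ι → ℝ}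

namespace IsSkewNormalFamily

theorem adjoint_apply_apply (ha : IsSkewNormalFamily X a ν)
    (hCC : adjoint C ∘ₗ C = 1 + X * X) (k : ι) (i : Fin 2) :
    adjoint C (C (a k i)) = (1 - ν k ^ 2) • a k i := by
  rw [← LinearMap.comp_apply, hCC, LinearMap.add_apply, Module.End.mul_apply, ha.apply_apply,
    Module.End.one_apply]
  module

theorem inner_map_map (ha : IsSkewNormalFamily X a ν) (hCC : adjoint C ∘ₗ C = 1 + X * X)
    (k l : ι) (i j : Fin 2) : ⟪C (a k i), C (a l j)⟫ = (1 - ν l ^ 2) * ⟪a k i, a l j⟫ := by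
  rw [← LinearMap.adjoint_inner_right, ha.adjoint_apply_apply hCC, inner_smul_right]

theorem norm_map_sq (ha : IsSkewNormalFamily X a ν) (hCC : adjoint C ∘ₗ C = 1 + X * X)
    (k : ι) (i : Fin 2) : ‖C (a k i)‖ ^ 2 = 1 - ν k ^ 2 := by
  rw [← real_inner_self_eq_norm_sq, ha.inner_map_map hCC, real_inner_self_eq_norm_sq,
    ha.norm_eq_one, one_pow, mul_one]

theorem sq_le_one (ha : IsSkewNormalFamily X a ν) (hCC : adjoint C ∘ₗ C = 1 + X * X) (k : ι) :
    ν k ^ 2 ≤ 1 :=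
  sub_nonneg.mp (ha.norm_map_sq hCC k 0 ▸ sq_nonneg _)

theorem eq_one_of_map_eq_zero (ha : IsSkewNormalFamily X a ν)
    (hCC : adjoint C ∘ₗ C = 1 + X * X) {k : ι} (hν : 0 ≤ ν k) (hCa : C (a k 0) = 0) : ν k = 1 := by
  have hnorm := ha.norm_map_sq hCC k 0
  rw [hCa, norm_zero, zero_pow two_ne_zero, eq_comm, sub_eq_zero, eq_comm] at hnorm
  exact (pow_eq_one_iff_of_nonneg hν two_ne_zero).mp hnorm

theorem map_eq_zero (ha : IsSkewNormalFamily X a ν) (hCC : adjoint C ∘ₗ C = 1 + X * X) {k : ι}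
    (hν : ¬ ν k ^ 2 < 1) (i : Fin 2) : C (a k i) = 0 := by
  have hnorm := ha.norm_map_sq hCC k i
  rw [← norm_eq_zero, ← sq_eq_zero_iff]
  linarith [sq_nonneg ‖C (a k i)‖]

theorem map (ha : IsSkewNormalFamily X a ν) (hCC : adjoint C ∘ₗ C = 1 + X * X)
    (hCX : C ∘ₗ X = -(Y ∘ₗ C)) (hν : ∀ k, ν k ^ 2 < 1) :
    IsSkewNormalFamily Y (fun k i => (√(1 - ν k ^ 2))⁻¹ • C (a k i)) (-ν) := by
  classical
  have hYC (x : E) : Y (C x) = -C (X x) := by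
    rw [← LinearMap.comp_apply, ← LinearMap.comp_apply, hCX, LinearMap.neg_apply, neg_neg]
  refine ⟨orthonormal_iff_ite.mpr fun p q => ?_, fun k => ?_, fun k => ?_⟩
  · rw [inner_smul_left, inner_smul_right, ha.inner_map_map hCC, ha.inner_eq_ite]
    split_ifs with hpq
    · obtain rfl : p = q := hpq
      have hpos := sub_pos.mpr (hν p.2)
      have hsqrt := Real.sqrt_ne_zero'.mpr hpos
      rw [RCLike.conj_to_real]
      field_simp
      exact (Real.sq_sqrt hpos.le).symm
    · simp only [mul_zero]
  · rw [map_smul, hYC, ha.apply_zero, map_smul, Pi.neg_apply]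
    module
  · rw [map_smul, hYC, ha.apply_one, map_smul, Pi.neg_apply]
    module

theorem adjoint_apply_eq_zero [Finite ι] (ha : IsSkewNormalFamily X a ν)
    (hcard : finrank ℝ E = 2 * Nat.card ι) {y : F} (hy : ∀ k i, ⟪C (a k i), y⟫ = 0) :
    adjoint C y = 0 := by
  have := Fintype.ofFinite ι
  refine eq_zero_of_forall_inner_orthonormal_eq_zero ha.orthonormal ?_ fun p => ?_
  · rw [hcard, Fintype.card_prod, Fintype.card_fin, Nat.card_eq_fintype_card]
  · rw [LinearMap.adjoint_inner_right, hy]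

end IsSkewNormalFamily

theorem exists_bipartite_normal_form [Finite ι] [Finite κ] (hX : adjoint X = -X)
    (hY : adjoint Y = -Y) (hCC : adjoint C ∘ₗ C = 1 + X * X) (hCC' : C ∘ₗ adjoint C = 1 + Y * Y)
    (hCX : C ∘ₗ X = -(Y ∘ₗ C)) (hE : finrank ℝ E = 2 * Nat.card ι)
    (hF : finrank ℝ F = 2 * (Nat.card ι + Nat.card κ)) :
    ∃ (a : ι → Fin 2 → E) (b : ι ⊕ κ → Fin 2 → F) (ν : ι → ℝ), (∀ k, ν k ∈ Set.Icc 0 1) ∧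
      IsSkewNormalFamily X a ν ∧ IsSkewNormalFamily Y b (Sum.elim (-ν) 1) ∧
      ∀ k i, C (a k i) = √(1 - ν k ^ 2) • b (.inl k) i := by
  classical
  obtain ⟨a, ν, hν, ha⟩ := exists_isSkewNormalFamily hX ι hE.ge
  let p (k : ι) : Prop := ν k ^ 2 < 1
  have hu := (ha.comp Subtype.val_injective).map hCC hCX fun k : {k // p k} => k.2
  obtain ⟨w, ρ, hρ, hw, huw⟩ := hu.exists_orthogonal hY ({k // ¬ p k} ⊕ κ) (by
    rw [hF, Nat.card_sum, ← add_assoc, ← Nat.card_sum, Nat.card_congr (Equiv.sumCompl p)])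
  have hsqrt (k : {k // p k}) : √(1 - ν k ^ 2) ≠ 0 := Real.sqrt_ne_zero'.mpr (sub_pos.mpr k.2)
  have hCw (l) (j : Fin 2) : adjoint C (w l j) = 0 := by
    refine ha.adjoint_apply_eq_zero hE fun k i => ?_
    by_cases hk : p k
    · simpa [inner_smul_left, hsqrt ⟨k, hk⟩] using huw ⟨k, hk⟩ i l j
    · rw [ha.map_eq_zero hCC hk, inner_zero_left]
  obtain rfl : ρ = 1 := funext fun l =>
    hw.eq_one_of_map_eq_zero (by rwa [LinearMap.adjoint_adjoint]) (hρ l) (hCw l 0)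
  have hν1 (k : {k // ¬ p k}) : ν k = 1 :=
    ha.eq_one_of_map_eq_zero hCC (hν k) (ha.map_eq_zero hCC k.2 0)
  have hb := hu.sumElim ((hw.comp Sum.inl_injective).swap.sumElim (hw.comp Sum.inr_injective)
    fun k i l j => by simp [hw.inner_eq_ite])
    fun k i => Sum.rec (fun l j => huw k i (.inl l) j.rev) fun l => huw k i (.inr l)
  let e : ι ⊕ κ ≃ {k // p k} ⊕ ({k // ¬ p k} ⊕ κ) :=
    ((Equiv.sumCompl p).symm.sumCongr (.refl κ)).trans (Equiv.sumAssoc _ _ _)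
  have hνe : Sum.elim (-ν) 1 = Sum.elim (-(ν ∘ Subtype.val)) (Sum.elim (-1) 1) ∘ e :=
    (e.comp_symm_eq _ _).mp <| funext <|
      Sum.rec (fun _ => rfl) (Sum.rec (fun k => congrArg Neg.neg (hν1 k)) fun _ => rfl)
  refine ⟨a, _, ν, fun k => ⟨hν k, ?_⟩, ha, by rw [hνe]; exact hb.comp e.injective,
    fun k i => ?_⟩
  · exact (sq_le_one_iff₀ (hν k)).mp (ha.sq_le_one hCC k)
  · by_cases hk : p k
    · simp [e, hk, smul_smul, hsqrt ⟨k, hk⟩]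
    · simp [ha.map_eq_zero hCC hk, hν1 ⟨k, hk⟩]

end Bipartite

end

section RowMatrix

variable {α β γ δ : Type*} [Fintype α] [Fintype β] [DecidableEq β]

/-- The matrix whose rows are the vectors `v x`: the change of coordinates to the family `v`. -/
def rowMatrix (v : γ → EuclideanSpace ℝ α) : Matrix γ α ℝ :=
  of fun x i => v x i

theorem rowMatrix_mul_mul_transpose (v : γ → EuclideanSpace ℝ α) (M : Matrix α β ℝ)
    (w : δ → EuclideanSpace ℝ β) :
    rowMatrix v * M * (rowMatrix w)ᵀ = of fun x y => inner ℝ (v x) (toEuclideanLin M (w y)) := by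
  ext x y
  simp only [of_apply, EuclideanSpace.inner_eq_star_dotProduct, star_trivial, toLpLin_apply]
  rw [Matrix.mul_assoc, mul_apply, dotProduct_comm]
  rfl

theorem rowMatrix_mem_orthogonalGroup {v : β → EuclideanSpace ℝ β} (hv : Orthonormal ℝ v) :
    rowMatrix v ∈ orthogonalGroup β ℝ := by
  have hgram := rowMatrix_mul_mul_transpose v 1 v
  rw [mul_one] at hgram
  rw [mem_orthogonalGroup_iff]
  refine hgram.trans ?_
  ext x y
  rw [of_apply, toLpLin_one, LinearMap.id_apply, orthonormal_iff_ite.mp hv, one_apply]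

end RowMatrix

section PureBlocks

variable {α β γ δ R : Type*}

theorem exists_eq_fromBlocks_of_transpose_eq_neg [InvolutiveNeg R]
    {Γ : Matrix (α ⊕ β) (α ⊕ β) R} (hΓ : Γᵀ = -Γ) :
    ∃ X Z Y, Xᵀ = -X ∧ Yᵀ = -Y ∧ Γ = fromBlocks X Z (-Zᵀ) Y := by
  rw [← fromBlocks_toBlocks Γ, fromBlocks_transpose, fromBlocks_neg, fromBlocks_inj] at hΓ
  obtain ⟨hX, -, hV, hY⟩ := hΓ
  exact ⟨_, _, _, hX, hY, by rw [hV, neg_neg, fromBlocks_toBlocks]⟩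

variable [Fintype α] [Fintype β]

theorem fromBlocks_mul_self_eq_neg_one [Ring R] [DecidableEq α] [DecidableEq β]
    {X : Matrix α α R} {Z : Matrix α β R} {Y : Matrix β β R}
    (h : fromBlocks X Z (-Zᵀ) Y * fromBlocks X Z (-Zᵀ) Y = -1) :
    Z * Zᵀ = 1 + X * X ∧ Zᵀ * Z = 1 + Y * Y ∧ Zᵀ * X = -(Y * Zᵀ) := by
  rw [fromBlocks_multiply, ← fromBlocks_one, fromBlocks_neg, fromBlocks_inj] at h
  obtain ⟨hXX, -, hZX, hYY⟩ := h
  simp only [Matrix.mul_neg, Matrix.neg_mul, neg_zero] at hXX hZX hYY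
  refine ⟨?_, ?_, ?_⟩
  · linear_combination (norm := abel) -hXX
  · linear_combination (norm := abel) -hYY
  · linear_combination (norm := abel) -hZX

theorem fromBlocks_diagonal_conj [CommRing R] (A : Matrix γ α R) (B : Matrix δ β R)
    (X : Matrix α α R) (Z : Matrix α β R) (Y : Matrix β β R) :
    fromBlocks A 0 0 B * fromBlocks X Z (-Zᵀ) Y * (fromBlocks A 0 0 B)ᵀ =
      fromBlocks (A * X * Aᵀ) (A * Z * Bᵀ) (-(A * Z * Bᵀ)ᵀ) (B * Y * Bᵀ) := by
  simp [fromBlocks_transpose, fromBlocks_multiply, Matrix.mul_assoc]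

end PureBlocks

section Canonical

variable {ι κ : Type*} [DecidableEq ι] [DecidableEq κ]

/-- The mode relabelling of the canonical form: the `k`-th pair of `A` and the `inl k`-th pair of
`B` become the indices `0, 1` and `2, 3` of the `k`-th block of size four, and the `inr l`-th pair
of `B` becomes the `l`-th block of size two. -/
def pairModes (ι κ : Type*) : (Fin 2 × ι) ⊕ (Fin 2 × (ι ⊕ κ)) ≃ (Fin 4 × ι) ⊕ (Fin 2 × κ) :=
  ((Equiv.refl _).sumCongr (Equiv.prodSumDistrib _ _ _)).trans <|
    (Equiv.sumAssoc _ _ _).symm.trans <|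
      (((Equiv.sumProdDistrib _ _ _).symm.trans
        (finSumFinEquiv.prodCongr (.refl _))).sumCongr (.refl _))

/-- The off-diagonal block of the canonical form, coupling the `k`-th pair of `A` to the `inl k`-th
pair of `B` with strength `μ k`. -/
def couplingMatrix (κ : Type*) [DecidableEq κ] (μ : ι → ℝ) :
    Matrix (Fin 2 × ι) (Fin 2 × (ι ⊕ κ)) ℝ :=
  of fun p q => if (p.1, Sum.inl p.2) = q then μ p.2 else 0

theorem fromBlocks_submatrix_pairModes (ν μ : ι → ℝ) :
    (fromBlocks (blockDiagonal fun k => gammaBlock (ν k) (μ k)) 0 0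
      (blockDiagonal fun _ => Jblock)).submatrix (pairModes ι κ) (pairModes ι κ) =
    fromBlocks (blockDiagonal fun k => ν k • Jblock) (couplingMatrix κ μ) (-(couplingMatrix κ μ)ᵀ)
      (blockDiagonal fun k => Sum.elim (-ν) 1 k • Jblock) := by
  ext (⟨i, k⟩ | ⟨i, k | k⟩) (⟨j, l⟩ | ⟨j, l | l⟩) <;> fin_cases i <;> fin_cases j <;>
    simp [couplingMatrix, pairModes, finSumFinEquiv, gammaBlock, Jblock, blockDiagonal_apply,
      eq_comm] <;>
    split_ifs with hkl <;> simp [hkl]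

end Canonical

section NormalForm

open LinearMap (adjoint)

variable {α β ι κ : Type*} [Fintype α] [Fintype β] [DecidableEq α] [DecidableEq β]

theorem adjoint_toEuclideanLin (M : Matrix α β ℝ) :
    adjoint (toEuclideanLin M) = toEuclideanLin Mᵀ := by
  rw [← toEuclideanLin_conjTranspose_eq_adjoint, conjTranspose_eq_transpose_of_trivial]

theorem adjoint_toEuclideanLin_eq_neg {X : Matrix α α ℝ} (hX : Xᵀ = -X) :
    adjoint (toEuclideanLin X) = -toEuclideanLin X := by
  rw [adjoint_toEuclideanLin, hX, map_neg]

theorem IsSkewNormalFamily.rowMatrix_mem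
    {T : EuclideanSpace ℝ α →ₗ[ℝ] EuclideanSpace ℝ α} {v : ι → Fin 2 → EuclideanSpace ℝ α}
    {ν : ι → ℝ} (hv : IsSkewNormalFamily T v ν) (f : α ≃ Fin 2 × ι) :
    rowMatrix (fun x => v (f x).2 (f x).1) ∈ orthogonalGroup α ℝ :=
  rowMatrix_mem_orthogonalGroup (hv.orthonormal.comp f f.injective)

theorem IsSkewNormalFamily.rowMatrix_conj [DecidableEq ι] {X : Matrix α α ℝ}
    {v : ι → Fin 2 → EuclideanSpace ℝ α} {ν : ι → ℝ}
    (hv : IsSkewNormalFamily (toEuclideanLin X) v ν) (f : α → Fin 2 × ι) :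
    rowMatrix (fun x => v (f x).2 (f x).1) * X * (rowMatrix fun x => v (f x).2 (f x).1)ᵀ =
      (blockDiagonal fun k => ν k • Jblock).submatrix f f := by
  rw [rowMatrix_mul_mul_transpose]
  ext x y
  exact hv.inner_apply (f x) (f y)

theorem IsSkewNormalFamily.rowMatrix_mul_mul_eq_couplingMatrix [DecidableEq ι] [DecidableEq κ]
    {Y : Matrix β β ℝ} {Z : Matrix α β ℝ} {a : ι → Fin 2 → EuclideanSpace ℝ α}
    {b : ι ⊕ κ → Fin 2 → EuclideanSpace ℝ β} {μ : ι → ℝ} {ρ : ι ⊕ κ → ℝ}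
    (hb : IsSkewNormalFamily (toEuclideanLin Y) b ρ)
    (hab : ∀ k i, toEuclideanLin Zᵀ (a k i) = μ k • b (.inl k) i) (f : α → Fin 2 × ι)
    (g : β → Fin 2 × (ι ⊕ κ)) :
    rowMatrix (fun x => a (f x).2 (f x).1) * Z * (rowMatrix fun y => b (g y).2 (g y).1)ᵀ =
      (couplingMatrix κ μ).submatrix f g := by
  rw [rowMatrix_mul_mul_transpose]
  ext x y
  rw [of_apply, ← LinearMap.adjoint_inner_left, adjoint_toEuclideanLin, hab, inner_smul_left,
    hb.inner_eq_ite]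
  simp [couplingMatrix]

theorem exists_bipartite_normal_form_of_pure [Finite ι] [Finite κ]
    (fA : α ≃ Fin 2 × ι) (fB : β ≃ Fin 2 × (ι ⊕ κ)) {X : Matrix α α ℝ}
    {Z : Matrix α β ℝ} {Y : Matrix β β ℝ} (hX : Xᵀ = -X) (hY : Yᵀ = -Y)
    (h : fromBlocks X Z (-Zᵀ) Y * fromBlocks X Z (-Zᵀ) Y = -1) :
    ∃ (a : ι → Fin 2 → EuclideanSpace ℝ α) (b : ι ⊕ κ → Fin 2 → EuclideanSpace ℝ β) (ν : ι → ℝ),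
      (∀ k, ν k ∈ Set.Icc 0 1) ∧ IsSkewNormalFamily (toEuclideanLin X) a ν ∧
      IsSkewNormalFamily (toEuclideanLin Y) b (Sum.elim (-ν) 1) ∧
      ∀ k i, toEuclideanLin Zᵀ (a k i) = √(1 - ν k ^ 2) • b (.inl k) i := by
  obtain ⟨hZZ, hZZ', hZX⟩ := fromBlocks_mul_self_eq_neg_one h
  refine exists_bipartite_normal_form (adjoint_toEuclideanLin_eq_neg hX)
    (adjoint_toEuclideanLin_eq_neg hY) ?_ ?_ ?_ ?_ ?_
  · rw [adjoint_toEuclideanLin, transpose_transpose, ← toLpLin_mul_same, hZZ, map_add, toLpLin_one,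
      toLpLin_mul_same]
    rfl
  · rw [adjoint_toEuclideanLin, transpose_transpose, ← toLpLin_mul_same, hZZ', map_add, toLpLin_one,
      toLpLin_mul_same]
    rfl
  · rw [← toLpLin_mul_same, hZX, map_neg, toLpLin_mul_same]
  · rw [finrank_euclideanSpace, ← Nat.card_eq_fintype_card, Nat.card_congr fA,
      Nat.card_prod, Nat.card_fin]
  · rw [finrank_euclideanSpace, ← Nat.card_eq_fintype_card, Nat.card_congr fB,
      Nat.card_prod, Nat.card_fin, Nat.card_sum]

theorem bipartite_canonical_form_general [Finite ι] [Finite κ] [DecidableEq ι] [DecidableEq κ]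
    (fA : α ≃ Fin 2 × ι) (fB : β ≃ Fin 2 × (ι ⊕ κ)) (Γ : Matrix (α ⊕ β) (α ⊕ β) ℝ)
    (hanti : Γᵀ = -Γ) (hpure : Γ * Γ = -1) :
    ∃ (OA : Matrix α α ℝ) (OB : Matrix β β ℝ) (ν : ι → ℝ),
      OA ∈ orthogonalGroup α ℝ ∧ OB ∈ orthogonalGroup β ℝ ∧ (∀ k, ν k ∈ Set.Icc (0 : ℝ) 1) ∧
      fromBlocks OA 0 0 OB * Γ * (fromBlocks OA 0 0 OB)ᵀ =
        (fromBlocks (blockDiagonal fun k => gammaBlock (ν k) √(1 - ν k ^ 2)) 0 0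
          (blockDiagonal fun _ => Jblock)).submatrix
            ((fA.sumCongr fB).trans (pairModes ι κ)) ((fA.sumCongr fB).trans (pairModes ι κ)) := by
  obtain ⟨X, Z, Y, hX, hY, rfl⟩ := exists_eq_fromBlocks_of_transpose_eq_neg hanti
  obtain ⟨a, b, ν, hν, ha, hb, hab⟩ :=
    exists_bipartite_normal_form_of_pure fA fB hX hY hpure
  refine ⟨_, _, ν, ha.rowMatrix_mem fA, hb.rowMatrix_mem fB, hν, ?_⟩
  rw [fromBlocks_diagonal_conj, ha.rowMatrix_conj, hb.rowMatrix_conj,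
    hb.rowMatrix_mul_mul_eq_couplingMatrix hab, Equiv.coe_trans, ← submatrix_submatrix,
    fromBlocks_submatrix_pairModes]
  ext (x | x) (y | y) <;> rfl

end NormalForm

/-- Bipartite canonical form of a pure Gaussian covariance matrix: there exist local
orthogonal transformations O_A, O_B and numbers ν_k ∈ [0,1] such that
(O_A ⊕ O_B) Γ (O_A ⊕ O_B)ᵀ is, up to a permutation of rows and columns pairing the
k-th A-mode with the k-th B-mode, the block-diagonal matrix
⨁_k Γ_k ⊕ ⨁_ℓ J, with μ_k = √(1 − ν_k²). -/
theorem bipartite_canonical_form (m n : ℕ) (hm : 1 ≤ m) (hmn : m ≤ n)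
    (Γ : Matrix (Fin (2 * m) ⊕ Fin (2 * n)) (Fin (2 * m) ⊕ Fin (2 * n)) ℝ)
    (hanti : Γᵀ = -Γ) (hpure : Γ * Γ = -1) :
    ∃ (OA : Matrix (Fin (2 * m)) (Fin (2 * m)) ℝ)
      (OB : Matrix (Fin (2 * n)) (Fin (2 * n)) ℝ)
      (ν : Fin m → ℝ)
      (e : (Fin (2 * m) ⊕ Fin (2 * n)) ≃ ((Fin 4 × Fin m) ⊕ (Fin 2 × Fin (n - m)))),
      OA ∈ Matrix.orthogonalGroup (Fin (2 * m)) ℝ ∧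
      OB ∈ Matrix.orthogonalGroup (Fin (2 * n)) ℝ ∧
      (∀ k, ν k ∈ Set.Icc (0 : ℝ) 1) ∧
      (∀ x : Fin (2 * m), ∃ (i : Fin 4) (k : Fin m),
        (i : ℕ) < 2 ∧ e (Sum.inl x) = Sum.inl (i, k)) ∧
      (Matrix.fromBlocks OA 0 0 OB) * Γ * (Matrix.fromBlocks OA 0 0 OB)ᵀ
        = (Matrix.fromBlocks
            (Matrix.blockDiagonal fun k : Fin m =>
              gammaBlock (ν k) (Real.sqrt (1 - ν k ^ 2))) 0 0
            (Matrix.blockDiagonal fun _ : Fin (n - m) => Jblock)).submatrix e e := by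
  let fA : Fin (2 * m) ≃ Fin 2 × Fin m := finProdFinEquiv.symm
  let fB : Fin (2 * n) ≃ Fin 2 × (Fin m ⊕ Fin (n - m)) :=
    Fintype.equivOfCardEq (by simp; omega)
  obtain ⟨OA, OB, ν, hOA, hOB, hν, hΓ⟩ := bipartite_canonical_form_general fA fB Γ hanti hpure
  exact ⟨OA, OB, ν, _, hOA, hOB, hν,
    fun x => ⟨Fin.castAdd 2 (fA x).1, (fA x).2, (fA x).1.isLt, rfl⟩, hΓ⟩
end

section
/- Let x̃ ∈ (0, 1]. Then −(1/(2π)) ∫₀^{x̃} log(1 − x + x²) · √((x̃ − x)/x) / (1 − x) dx = Re[ 2√(1 − x̃) · Log( (√(1 − x̃) + √(1 − x̃·e^{iπ/3})) / (√(1 − x̃) + 1) ) − 2·Log( (1 + √(1 − x̃·e^{iπ/3}))/2 ) ], where Log and the complex square root are taken with the principal branch. In particular, with x̃ = 4ℓ(1 − ℓ) this gives the closed form of the thermodynamic nonlocal-magic density 𝒥(ℓ) = lim_{L→∞} (1/L)·𝔼_Γ[M₂,₊^{NL}(ψ_Γ)] of the Gaussian Haar ensemble. -/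
/-!
With `x = a (1 - Re z) / 2` and `b = √(1 - a)`, the measure `√((a - x) / x) / (1 - x) dx` between
`0` and `a` becomes `π (1 - b² / (1 - x))` times the normalized arc length on the unit circle.
Let `L_c` be the Fejér–Riesz factor with parameter `c`. On the circle, `1 - x = |L_b(z)|²`, so that
`b / (1 - x)` is the Poisson kernel of the point `p = (b - 1) / (b + 1)`. If `c² = 1 - a w` with
`0 < Re c`, then also `1 - x w = L_c(z) · conj (L_{conj c}(z))`, so `log |1 - x w|²` is the boundary
value of the harmonic function `h = 2 (log |L_c| + log |L_{conj c}|)`. Hence the integral of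
`log |1 - x w|²` equals `π (h(0) - b h(p))`, where `L_c(0) = (1 + c) / 2` and
`L_c(p) = (b + c) / (b + 1)`.
-/

open Real intervalIntegral Complex

open InnerProductSpace Metric
open scoped ComplexConjugate

lemma re_cpow_inv_two_pos_iff {z : ℂ} : 0 < (z ^ (2⁻¹ : ℂ)).re ↔ z ∈ slitPlane := by
  have hle : -‖z‖ ≤ z.re := (abs_le.mp (abs_re_le_norm z)).1
  rw [cpow_inv_two_re, Real.sqrt_pos, mem_slitPlane_iff_not_le_zero, ← re_eq_neg_norm,
    ← ne_eq, ne_comm, ← hle.lt_iff_ne]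
  constructor <;> intro h <;> linarith

lemma sin_mul_sqrt_div_one_sub {a φ : ℝ} (ha : a ≤ 1) (hφ : φ ∈ Set.Ioo 0 π) :
    a * Real.sin φ / 2 * (√((a - a * (1 - Real.cos φ) / 2) / (a * (1 - Real.cos φ) / 2)) /
      (1 - a * (1 - Real.cos φ) / 2)) = 1 - (1 - a) / (1 - a * (1 - Real.cos φ) / 2) := by
  have hsin : 0 < Real.sin φ := Real.sin_pos_of_mem_Ioo hφ
  have hcos : Real.cos φ < 1 := by
    simpa using Real.cos_lt_cos_of_nonneg_of_le_pi le_rfl hφ.2.le hφ.1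
  have hcos' : -1 < Real.cos φ := by
    simpa using Real.cos_lt_cos_of_nonneg_of_le_pi hφ.1.le le_rfl hφ.2
  have hx : 0 < 1 - a * (1 - Real.cos φ) / 2 := by nlinarith
  have hone_sub : 0 < 1 - Real.cos φ := by linarith
  obtain rfl | ha₀ := eq_or_ne a 0
  · simp
  have hratio : (a - a * (1 - Real.cos φ) / 2) / (a * (1 - Real.cos φ) / 2) =
      (Real.sin φ / (1 - Real.cos φ)) ^ 2 := by
    rw [div_pow, Real.sin_sq]
    field_simp
    ring
  have hnum : a * Real.sin φ / 2 * (Real.sin φ / (1 - Real.cos φ)) =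
      (1 - a * (1 - Real.cos φ) / 2) - (1 - a) := by
    field_simp
    rw [Real.sin_sq]
    ring
  rw [hratio, Real.sqrt_sq (by positivity), ← mul_div_assoc, hnum, sub_div, div_self hx.ne']

section

variable {E : Type*} [NormedAddCommGroup E] [NormedSpace ℝ E]

lemma integral_eq_integral_sin_smul_comp_cos (a : ℝ) (g : ℝ → E) :
    ∫ x in 0..a, g x =
      ∫ φ in 0..π, (a * Real.sin φ / 2) • g (a * (1 - Real.cos φ) / 2) := by
  have hderiv (φ : ℝ) :
      HasDerivAt (fun t : ℝ ↦ a * (1 - Real.cos t) / 2) (a * Real.sin φ / 2) φ := by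
    simpa using! (((Real.hasDerivAt_cos φ).const_sub 1).const_mul a).div_const 2
  have hsin {φ : ℝ} (hφ : φ ∈ Set.Ioo (min 0 π) (max 0 π)) : 0 ≤ Real.sin φ := by
    rw [min_eq_left pi_pos.le, max_eq_right pi_pos.le] at hφ
    exact (Real.sin_pos_of_mem_Ioo hφ).le
  have hcont : ContinuousOn (fun t : ℝ ↦ a * (1 - Real.cos t) / 2) (Set.uIcc 0 π) := by fun_prop
  have hzero : a * (1 - Real.cos 0) / 2 = 0 := by simp
  have hpi : a * (1 - Real.cos π) / 2 = a := by rw [Real.cos_pi]; ring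
  have hsubst : ∫ φ in 0..π, (a * Real.sin φ / 2) • g (a * (1 - Real.cos φ) / 2) =
      ∫ x in a * (1 - Real.cos 0) / 2..a * (1 - Real.cos π) / 2, g x := by
    rcases le_total 0 a with ha | ha
    · exact integral_deriv_smul_comp_of_deriv_nonneg hcont (fun φ _ ↦ hderiv φ)
        fun φ hφ ↦ div_nonneg (mul_nonneg ha (hsin hφ)) zero_le_two
    · exact integral_deriv_smul_comp_of_deriv_nonpos hcont (fun φ _ ↦ hderiv φ)
        fun φ hφ ↦ div_nonpos_of_nonpos_of_nonneg
          (mul_nonpos_of_nonpos_of_nonneg ha (hsin hφ)) zero_le_two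
  rw [hsubst, hzero, hpi]

lemma integral_zero_two_pi_comp_cos (f : ℝ → E) :
    ∫ φ in 0..2 * π, f (Real.cos φ) = (2 : ℝ) • ∫ φ in 0..π, f (Real.cos φ) := by
  have hsub : 2 * π - π = π := by ring
  by_cases h : IntervalIntegrable (fun φ ↦ f (Real.cos φ)) MeasureTheory.volume 0 π
  · have hreflect : ∫ φ in π..2 * π, f (Real.cos φ) = ∫ φ in 0..π, f (Real.cos φ) := by
      simpa only [Real.cos_two_pi_sub, hsub, sub_zero] using
        (integral_comp_sub_left (a := 0) (b := π) (fun φ ↦ f (Real.cos φ)) (2 * π)).symm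
    have h' : IntervalIntegrable (fun φ ↦ f (Real.cos φ)) MeasureTheory.volume π (2 * π) := by
      simpa only [Real.cos_two_pi_sub, hsub, sub_zero] using (h.comp_sub_left (2 * π)).symm
    rw [← integral_add_adjacent_intervals h h', hreflect, two_smul]
  · have h' : ¬IntervalIntegrable (fun φ ↦ f (Real.cos φ)) MeasureTheory.volume 0 (2 * π) :=
      fun hint ↦ h <| hint.mono_set <| Set.uIcc_subset_uIcc_left <| by
        rw [Set.uIcc_of_le two_pi_pos.le]
        constructor <;> linarith [pi_pos]
    rw [integral_undef h, integral_undef h', smul_zero]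

lemma circleAverage_comp_re (f : ℝ → E) (c : ℂ) (R : ℝ) :
    circleAverage (fun z ↦ f z.re) c R = π⁻¹ • ∫ φ in 0..π, f (c.re + R * Real.cos φ) := by
  have hre (φ : ℝ) : (circleMap c R φ).re = c.re + R * Real.cos φ := by
    simp [circleMap, exp_ofReal_mul_I_re]
  simp only [circleAverage_def, hre]
  rw [integral_zero_two_pi_comp_cos fun t ↦ f (c.re + R * t), smul_smul, mul_inv_rev, mul_assoc,
    inv_mul_cancel₀ two_ne_zero, mul_one]

lemma integral_sqrt_div_one_sub_smul {a : ℝ} (ha : a ≤ 1) (g : ℝ → E) :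
    ∫ x in 0..a, (√((a - x) / x) / (1 - x)) • g x =
      π • circleAverage (fun z ↦ (1 - (1 - a) / (1 - a * (1 - z.re) / 2)) •
        g (a * (1 - z.re) / 2)) 0 1 := by
  rw [circleAverage_comp_re fun t ↦ (1 - (1 - a) / (1 - a * (1 - t) / 2)) • g (a * (1 - t) / 2),
    smul_inv_smul₀ pi_ne_zero, integral_eq_integral_sin_smul_comp_cos]
  refine integral_congr_Ioo_of_le pi_pos.le fun φ hφ ↦ ?_
  simp only [smul_smul, zero_re, zero_add, one_mul, sin_mul_sqrt_div_one_sub ha hφ]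

end

/-- The spectral (Fejér–Riesz) factor of the trigonometric polynomial `1 - (1 - c²)(1 - Re z)/2` on
the unit circle. The square root `c` is taken as the parameter: `0 < Re c` selects the factor
without zeros in the closed unit disc. -/
noncomputable def spectralFactor (c z : ℂ) : ℂ := ((1 + c) + (1 - c) * z) / 2

lemma spectralFactor_zero (c : ℂ) : spectralFactor c 0 = (1 + c) / 2 := by
  simp [spectralFactor]

lemma spectralFactor_sub_one_div_add_one {b : ℂ} (hb : b + 1 ≠ 0) (c : ℂ) :
    spectralFactor c ((b - 1) / (b + 1)) = (b + c) / (b + 1) := by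
  unfold spectralFactor
  field_simp
  ring

lemma spectralFactor_ne_zero {c z : ℂ} (hc : 0 < c.re) (hz : ‖z‖ ≤ 1) :
    spectralFactor c z ≠ 0 := by
  have hlt : ‖1 - c‖ < ‖1 + c‖ := by
    rw [← sq_lt_sq₀ (norm_nonneg _) (norm_nonneg _), ← normSq_eq_norm_sq, ← normSq_eq_norm_sq,
      normSq_sub, normSq_add]
    simp only [map_one, one_mul, conj_re]
    linarith
  intro h
  have hroot : 1 + c = -((1 - c) * z) := by
    rw [spectralFactor, div_eq_zero_iff, or_iff_left two_ne_zero] at h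
    exact eq_neg_of_add_eq_zero_left h
  refine hlt.not_ge ?_
  rw [hroot, norm_neg, norm_mul]
  exact mul_le_of_le_one_right (norm_nonneg _) hz

lemma spectralFactor_mul_conj (c : ℂ) {z : ℂ} (hz : ‖z‖ = 1) :
    spectralFactor c z * conj (spectralFactor (conj c) z) =
      1 - (1 - c ^ 2) * ((1 - z.re) / 2) := by
  have hzz : z * conj z = 1 := by simp [mul_conj, normSq_eq_norm_sq, hz]
  have hre : (z.re : ℂ) = (z + conj z) / 2 := re_eq_add_conj z
  simp only [spectralFactor, map_div₀, map_add, map_sub, map_mul, map_one, conj_conj, hre,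
    map_ofNat]
  linear_combination ((1 - c) ^ 2 / 4) * hzz

lemma sq_norm_spectralFactor_ofReal (b : ℝ) {z : ℂ} (hz : ‖z‖ = 1) :
    ‖spectralFactor b z‖ ^ 2 = 1 - (1 - b ^ 2) * (1 - z.re) / 2 := by
  have h := spectralFactor_mul_conj b hz
  rw [conj_ofReal, mul_conj, normSq_eq_norm_sq] at h
  rw [mul_div_assoc]
  exact_mod_cast h

lemma norm_spectralFactor_conj_ofReal (c : ℂ) (x : ℝ) :
    ‖spectralFactor (conj c) x‖ = ‖spectralFactor c x‖ := by
  rw [← norm_conj (spectralFactor c x)]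
  simp [spectralFactor]

lemma harmonicOnNhd_log_norm_spectralFactor {c : ℂ} (hc : 0 < c.re) :
    HarmonicOnNhd (fun z ↦ Real.log ‖spectralFactor c z‖) (closedBall 0 1) := by
  intro z hz
  refine AnalyticAt.harmonicAt_log_norm ?_ (spectralFactor_ne_zero hc (by simpa using hz))
  unfold spectralFactor
  fun_prop

lemma poissonKernel_eq_div_sq_norm_spectralFactor {b : ℝ} (hb : b + 1 ≠ 0) {z : ℂ}
    (hz : ‖z‖ = 1) :
    poissonKernel 0 (((b - 1) / (b + 1) : ℝ) : ℂ) z = b / ‖spectralFactor b z‖ ^ 2 := by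
  set p : ℝ := (b - 1) / (b + 1) with hp
  have hnum : 1 - p ^ 2 = b * (4 / (b + 1) ^ 2) := by
    rw [hp]
    field_simp
    ring
  have hden : ‖z - p‖ ^ 2 = ‖spectralFactor b z‖ ^ 2 * (4 / (b + 1) ^ 2) := by
    rw [sq_norm_spectralFactor_ofReal b hz, ← normSq_eq_norm_sq, normSq_sub, normSq_eq_norm_sq, hz,
      normSq_ofReal, conj_ofReal, re_mul_ofReal, hp]
    field_simp
    ring
  rw [poissonKernel_def, sub_zero, sub_zero, hz, one_pow, norm_real, Real.norm_eq_abs, sq_abs,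
    hnum, hden, mul_div_mul_right _ _ (by positivity)]

lemma continuousOn_poissonKernel_sphere {c w : ℂ} {R : ℝ} (hw : w ∈ ball c R) :
    ContinuousOn (poissonKernel c w) (sphere c R) := by
  have hne {z : ℂ} (hz : z ∈ sphere c R) : ‖z - c - (w - c)‖ ^ 2 ≠ 0 := by
    rw [sub_sub_sub_cancel_right]
    refine pow_ne_zero 2 (norm_ne_zero_iff.mpr (sub_ne_zero.mpr ?_))
    rintro rfl
    exact (mem_ball.mp hw).ne (mem_sphere.mp hz)
  exact ContinuousOn.div (by fun_prop) (by fun_prop) fun _ hz ↦ hne hz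

lemma circleAverage_one_sub_div_sq_norm_spectralFactor_mul {b : ℝ} (hb : 0 ≤ b) {f : ℂ → ℝ}
    (hf : HarmonicOnNhd f (closedBall 0 1)) :
    circleAverage (fun z ↦ (1 - b ^ 2 / ‖spectralFactor b z‖ ^ 2) * f z) 0 1 =
      f 0 - b * f (((b - 1) / (b + 1) : ℝ) : ℂ) := by
  set p : ℝ := (b - 1) / (b + 1)
  have hmean : circleAverage f 0 1 = f 0 :=
    InnerProductSpace.HarmonicOnNhd.circleAverage_eq (by simpa using hf)
  -- For `b = 0` the point `p = -1` lies on the circle, but its Poisson kernel has weight zero.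
  obtain rfl | hb₀ := hb.eq_or_lt
  · simpa using hmean
  have hp : (p : ℂ) ∈ ball (0 : ℂ) 1 := by
    rw [mem_ball_zero_iff, norm_real, Real.norm_eq_abs, abs_lt, lt_div_iff₀ (by linarith),
      div_lt_one (by linarith)]
    constructor <;> linarith
  have hpoisson : circleAverage (poissonKernel 0 p • f) 0 1 = f p :=
    HarmonicOnNhd.circleAverage_poissonKernel_smul hf hp
  have hsplit : Set.EqOn (fun z ↦ (1 - b ^ 2 / ‖spectralFactor b z‖ ^ 2) * f z)
      (f - b • (poissonKernel 0 p • f)) (sphere 0 |1|) := by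
    intro z hz
    have hz' : ‖z‖ = 1 := by simpa using hz
    simp only [Pi.sub_apply, Pi.smul_apply, Pi.mul_apply, smul_eq_mul, p,
      poissonKernel_eq_div_sq_norm_spectralFactor (by positivity : b + 1 ≠ 0) hz']
    ring
  have hf_int : CircleIntegrable f 0 1 := ContinuousOn.circleIntegrable zero_le_one
    (hf.continuousOn.mono sphere_subset_closedBall)
  have hpoisson_int : CircleIntegrable (poissonKernel 0 p • f) 0 1 :=
    hf_int.continuousOn_smul (by simpa using continuousOn_poissonKernel_sphere hp)
  rw [circleAverage_congr_sphere hsplit, circleAverage_sub hf_int (hpoisson_int.const_smul),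
    circleAverage_smul, hmean, hpoisson, smul_eq_mul]

lemma log_normSq_eq_log_norm_spectralFactor_add {c : ℂ} (hc : 0 < c.re) {z : ℂ} (hz : ‖z‖ = 1) :
    Real.log (normSq (1 - (1 - c ^ 2) * ((1 - z.re) / 2))) =
      2 * (Real.log ‖spectralFactor c z‖ + Real.log ‖spectralFactor (conj c) z‖) := by
  have hc' : 0 < (conj c).re := hc
  rw [← spectralFactor_mul_conj c hz, normSq_eq_norm_sq, Real.log_pow, norm_mul, norm_conj,
    Real.log_mul (norm_ne_zero_iff.mpr (spectralFactor_ne_zero hc hz.le))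
      (norm_ne_zero_iff.mpr (spectralFactor_ne_zero hc' hz.le))]
  norm_num

lemma circleAverage_one_sub_div_mul_log_normSq {b : ℝ} (hb : 0 ≤ b) {c : ℂ} (hc : 0 < c.re) :
    circleAverage (fun z ↦ (1 - b ^ 2 / ‖spectralFactor b z‖ ^ 2) *
        Real.log (normSq (1 - (1 - c ^ 2) * ((1 - z.re) / 2)))) 0 1 =
      4 * (Real.log ‖(1 + c) / 2‖ - b * Real.log ‖(b + c) / (b + 1)‖) := by
  set h : ℂ → ℝ := (fun z ↦ Real.log ‖spectralFactor c z‖) +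
    fun z ↦ Real.log ‖spectralFactor (conj c) z‖
  have hh : HarmonicOnNhd h (closedBall 0 1) :=
    (harmonicOnNhd_log_norm_spectralFactor hc).add (harmonicOnNhd_log_norm_spectralFactor hc)
  have hh_real (x : ℝ) : h x = 2 * Real.log ‖spectralFactor c x‖ := by
    simp only [h, Pi.add_apply, norm_spectralFactor_conj_ofReal, two_mul]
  have hzero : h 0 = 2 * Real.log ‖(1 + c) / 2‖ := by
    rw [← spectralFactor_zero, ← ofReal_zero, hh_real]
  have hpole : h (((b - 1) / (b + 1) : ℝ) : ℂ) = 2 * Real.log ‖(b + c) / (b + 1)‖ := by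
    have hb₁ : (b + 1 : ℂ) ≠ 0 := by exact_mod_cast (by positivity : b + 1 ≠ 0)
    rw [← spectralFactor_sub_one_div_add_one hb₁, hh_real]
    push_cast
    rfl
  have hboundary : Set.EqOn (fun z ↦ (1 - b ^ 2 / ‖spectralFactor b z‖ ^ 2) *
      Real.log (normSq (1 - (1 - c ^ 2) * ((1 - z.re) / 2))))
      ((2 : ℝ) • fun z ↦ (1 - b ^ 2 / ‖spectralFactor b z‖ ^ 2) * h z) (sphere 0 |1|) := by
    intro z hz
    have hz' : ‖z‖ = 1 := by simpa using hz
    simp only [log_normSq_eq_log_norm_spectralFactor_add hc hz', h, Pi.smul_apply, Pi.add_apply,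
      smul_eq_mul]
    ring
  rw [circleAverage_congr_sphere hboundary, circleAverage_smul,
    circleAverage_one_sub_div_sq_norm_spectralFactor_mul hb hh, hzero, hpole, smul_eq_mul]
  ring

lemma integral_log_normSq_mul_sqrt_div_one_sub {a b : ℝ} {c w : ℂ} (hb : 0 ≤ b) (hc : 0 < c.re)
    (hb_sq : b ^ 2 = 1 - a) (hc_sq : c ^ 2 = 1 - a * w) :
    ∫ x in 0..a, Real.log (normSq (1 - x * w)) * (√((a - x) / x) / (1 - x)) =
      4 * π * (Real.log ‖(1 + c) / 2‖ - b * Real.log ‖(b + c) / (b + 1)‖) := by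
  have ha : a ≤ 1 := by linarith [sq_nonneg b]
  simp_rw [mul_comm (Real.log _), ← smul_eq_mul (√_ / _)]
  rw [integral_sqrt_div_one_sub_smul ha, mul_comm 4, mul_assoc,
    ← circleAverage_one_sub_div_mul_log_normSq hb hc, smul_eq_mul]
  refine congrArg _ (circleAverage_congr_sphere fun z hz ↦ ?_)
  have hsub : 1 - ((a * (1 - z.re) / 2 : ℝ) : ℂ) * w = 1 - (1 - c ^ 2) * ((1 - z.re) / 2) := by
    rw [hc_sq]
    push_cast
    ring
  simp only [hsub, sq_norm_spectralFactor_ofReal b (by simpa using hz : ‖z‖ = 1), hb_sq,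
    sub_sub_cancel, smul_eq_mul]

theorem nonlocal_magic_density_closed_form_general (xt : ℝ) (w : ℂ) (hx : xt ≤ 1)
    (hw : 1 - xt * w ∈ slitPlane) :
    -(1 / (2 * Real.pi)) *
        ∫ x in (0 : ℝ)..xt,
          Real.log (normSq (1 - x * w)) * (Real.sqrt ((xt - x) / x) / (1 - x))
      = (2 * (Real.sqrt (1 - xt) : ℂ) *
            Complex.log
              (((Real.sqrt (1 - xt) : ℂ) + (1 - xt * w) ^ ((1 : ℂ) / 2)) /
                ((Real.sqrt (1 - xt) : ℂ) + 1)) -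
          2 * Complex.log ((1 + (1 - xt * w) ^ ((1 : ℂ) / 2)) / 2)).re := by
  have hb_sq : √(1 - xt) ^ 2 = 1 - xt := Real.sq_sqrt (by linarith)
  have hc : 0 < ((1 - xt * w) ^ ((1 : ℂ) / 2)).re := by rwa [one_div, re_cpow_inv_two_pos_iff]
  have hc_sq : ((1 - xt * w) ^ ((1 : ℂ) / 2)) ^ 2 = 1 - xt * w := by simp
  have hre (r : ℝ) (u v : ℂ) : (2 * r * u - 2 * v).re = 2 * r * u.re - 2 * v.re := by simp
  rw [integral_log_normSq_mul_sqrt_div_one_sub (Real.sqrt_nonneg _) hc hb_sq hc_sq, hre, log_re,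
    log_re]
  field_simp
  ring

lemma normSq_one_sub_mul_exp_pi_div_three (x : ℝ) :
    normSq (1 - x * Complex.exp ((Real.pi / 3 : ℝ) * I)) = 1 - x + x ^ 2 := by
  rw [normSq_sub, normSq_mul, normSq_eq_norm_sq (Complex.exp _), norm_exp_ofReal_mul_I, map_mul,
    conj_ofReal, one_mul, re_ofReal_mul, conj_re, exp_ofReal_mul_I_re, Real.cos_pi_div_three,
    normSq_one, normSq_ofReal]
  ring

lemma one_sub_mul_exp_pi_div_three_mem_slitPlane {x : ℝ} (hx : x < 2) :
    1 - x * Complex.exp ((Real.pi / 3 : ℝ) * I) ∈ slitPlane := by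
  left
  rw [sub_re, re_ofReal_mul, exp_ofReal_mul_I_re, Real.cos_pi_div_three, one_re]
  linarith

/-- Closed form of the thermodynamic nonlocal-magic density: for xt ∈ (0, 1],
−(1/(2π)) ∫₀^{xt} log(1 − x + x²)·√((xt−x)/x)/(1−x) dx equals
Re[ 2√(1−xt)·Log((√(1−xt) + √(1 − xte^{iπ/3}))/(√(1−xt) + 1)) − 2·Log((1 + √(1 − xte^{iπ/3}))/2) ],
with principal branches. -/
theorem nonlocal_magic_density_closed_form (xt : ℝ) (hx : xt ∈ Set.Ioc (0 : ℝ) 1) :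
    -(1 / (2 * Real.pi)) *
        ∫ x in (0 : ℝ)..xt,
          Real.log (1 - x + x ^ 2) * (Real.sqrt ((xt - x) / x) / (1 - x))
      = (2 * (Real.sqrt (1 - xt) : ℂ) *
            Complex.log
              (((Real.sqrt (1 - xt) : ℂ) +
                  (1 - (xt : ℂ) * Complex.exp ((Real.pi / 3 : ℝ) * Complex.I)) ^ ((1 : ℂ) / 2)) /
                ((Real.sqrt (1 - xt) : ℂ) + 1)) -
          2 * Complex.log
              ((1 + (1 - (xt : ℂ) * Complex.exp ((Real.pi / 3 : ℝ) * Complex.I)) ^ ((1 : ℂ) / 2)) /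
                2)).re := by
  simpa only [normSq_one_sub_mul_exp_pi_div_three] using
    nonlocal_magic_density_closed_form_general xt _ hx.2
      (one_sub_mul_exp_pi_div_three_mem_slitPlane (by linarith [hx.2]))
end
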